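/- arXiv:2310.12116 — 5 statements merged into one kernel-verified Lean document; each statement's English description precedes it below -/
import Mathlib

section
/- Let d, k be natural numbers with 1 ≤ k ≤ d, let p, q : Fin d → ℝ be two d-dimensional data items, and let α be an index with α < k (so that α + d − k < d). If sorted(p)(α + d − k) < sorted(q)(α) (i.e., MI_max(p, k, α) < MI_min(q, k, α)), then q does not k-dominate p. -/
/-- The nondecreasing rearrangement of `u` (Mathlib's `Tuple.sort`). -/
noncomputable def sortedTuple {d : ℕ} (u : Fin d → ℝ) : Fin d → ℝ :=
  u ∘ Tuple.sort u

/-- `q` k-dominates `p`: there is a set `S` of at least `k` coordinates on which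
`q` is no worse than `p`, and `q` is strictly better on some coordinate. -/
def kDom {d : ℕ} (k : ℕ) (q p : Fin d → ℝ) : Prop :=
  (∃ S : Finset (Fin d), k ≤ S.card ∧ ∀ j ∈ S, q j ≤ p j) ∧ ∃ j', q j' < p j'

/-- The `j`-th smallest entry of `u` is at most `a` iff more than `j` entries of `u` are. -/
lemma sortedTuple_le_iff_lt_card {d : ℕ} (u : Fin d → ℝ) (j : Fin d) (a : ℝ) :
    sortedTuple u j ≤ a ↔ (j : ℕ) < (Finset.univ.filter fun i => u i ≤ a).card := by
  have hcard : (Finset.univ.filter fun i => sortedTuple u i ≤ a).card =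
      (Finset.univ.filter fun i => u i ≤ a).card :=
    Finset.card_equiv (Tuple.sort u) fun i => by
      simp only [Finset.mem_filter_univ]
      rfl
  rw [← hcard]
  exact (Tuple.lt_card_le_iff_apply_le_of_monotone (Tuple.monotone_sort u)).symm

/-- If `MI_max(p, k, α) < MI_min(q, k, α)` then `q` cannot k-dominate `p`. -/
theorem mi_threshold_not_kDom {d k : ℕ} (hk1 : 1 ≤ k) (hkd : k ≤ d)
    (p q : Fin d → ℝ) (α : ℕ) (hα : α < k)
    (h : sortedTuple p ⟨α + d - k, by omega⟩ < sortedTuple q ⟨α, by omega⟩) :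
    ¬ kDom k q p := by
  rintro ⟨⟨S, hS, hSle⟩, -⟩
  set a := sortedTuple p ⟨α + d - k, by omega⟩ with ha
  set P := Finset.univ.filter fun i => p i ≤ a
  have hP : α + d - k < P.card := (sortedTuple_le_iff_lt_card p _ a).1 ha.ge
  have hQ : (Finset.univ.filter fun i => q i ≤ a).card ≤ α :=
    not_lt.1 fun hlt => h.not_ge ((sortedTuple_le_iff_lt_card q ⟨α, by omega⟩ a).2 hlt)
  have hsub : P ∩ S ⊆ Finset.univ.filter fun i => q i ≤ a := by
    intro i hi
    obtain ⟨hiP, hiS⟩ := Finset.mem_inter.1 hi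
    exact Finset.mem_filter.2
      ⟨Finset.mem_univ i, (hSle i hiS).trans (Finset.mem_filter.1 hiP).2⟩
  have hinter := Finset.card_le_card hsub
  have hunion : (P ∪ S).card ≤ d := by simpa using Finset.card_le_univ (P ∪ S)
  have hadd := Finset.card_union_add_card_inter P S
  omega
end

section
/- Let d, k be natural numbers with 1 ≤ k ≤ d, let p, q : Fin d → ℝ, and let α be an index with α < k. If sorted(p)(α + d − k) < sorted(q)(α), then the number of coordinates j : Fin d with q j ≤ p j is at most k − 1, i.e., the cardinality of the finite set {j : Fin d | q j ≤ p j} is at most k − 1. -/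
/-- The `j`-th entry of the nondecreasing rearrangement is at most `t` exactly when
more than `j` entries are at most `t`. -/
theorem lt_card_le_iff_sortedTuple_le {d : ℕ} (u : Fin d → ℝ) (t : ℝ) (j : Fin d) :
    (j : ℕ) < (Finset.univ.filter (fun i => u i ≤ t)).card ↔ sortedTuple u j ≤ t := by
  have hcard : (Finset.univ.filter (fun i => sortedTuple u i ≤ t)).card =
      (Finset.univ.filter (fun i => u i ≤ t)).card :=
    Finset.card_equiv (Tuple.sort u) fun i => by
      rw [Finset.mem_filter_univ, Finset.mem_filter_univ]; rfl
  rw [← hcard]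
  exact Tuple.lt_card_le_iff_apply_le_of_monotone (Tuple.monotone_sort u)

/-- If `MI_max(p, k, α) < MI_min(q, k, α)` then `q` is no worse than `p` on at
most `k - 1` coordinates. -/
theorem card_le_of_mi_threshold {d k : ℕ} (hk1 : 1 ≤ k) (hkd : k ≤ d)
    (p q : Fin d → ℝ) (α : ℕ) (hα : α < k)
    (h : sortedTuple p ⟨α + d - k, by omega⟩ < sortedTuple q ⟨α, by omega⟩) :
    (Finset.univ.filter (fun j : Fin d => q j ≤ p j)).card ≤ k - 1 := by
  set t := sortedTuple p ⟨α + d - k, by omega⟩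
  have hp := (lt_card_le_iff_sortedTuple_le p t _).2 le_rfl
  have hq := (lt_card_le_iff_sortedTuple_le q t _).not.2 (not_le.2 h)
  have hsub : Finset.univ.filter (fun j => q j ≤ p j) ⊆
      (Finset.univ.filter (fun j => p j ≤ t))ᶜ ∪ Finset.univ.filter (fun j => q j ≤ t) := by
    intro j hj
    simp only [Finset.mem_filter_univ, Finset.mem_union, Finset.mem_compl] at hj ⊢
    exact (em (p j ≤ t)).symm.imp_right hj.trans
  have hcard := (Finset.card_le_card hsub).trans (Finset.card_union_le _ _)
  rw [Finset.card_compl, Fintype.card_fin] at hcard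
  dsimp only at hp hq
  omega
end

section
/- Let d, k be natural numbers with 1 ≤ k ≤ d and let p, q : Fin d → ℝ. If q k-dominates p, then for every index α with α < k one has sorted(q)(α) ≤ sorted(p)(α + d − k), i.e., MI_min(q, k, α) ≤ MI_max(p, k, α) for all admissible α. -/
theorem sortedTuple_monotone {d : ℕ} (u : Fin d → ℝ) : Monotone (sortedTuple u) :=
  Tuple.monotone_sort u

theorem lt_card_filter_le_sortedTuple {d : ℕ} (u : Fin d → ℝ) (i : Fin d) :
    (i : ℕ) < (Finset.univ.filter fun j => u j ≤ sortedTuple u i).card := by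
  have hsub : (Finset.Iic i).map (Tuple.sort u).toEmbedding ⊆
      Finset.univ.filter fun j => u j ≤ sortedTuple u i := by
    intro j hj
    obtain ⟨l, hl, rfl⟩ := Finset.mem_map.1 hj
    exact Finset.mem_filter.2
      ⟨Finset.mem_univ _, sortedTuple_monotone u (Finset.mem_Iic.1 hl)⟩
  have hcard := Finset.card_le_card hsub
  rw [Finset.card_map, Fin.card_Iic] at hcard
  omega

theorem sub_le_card_filter_sortedTuple_le {d : ℕ} (u : Fin d → ℝ) (i : Fin d) :
    d - i ≤ (Finset.univ.filter fun j => sortedTuple u i ≤ u j).card := by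
  have hsub : (Finset.Ici i).map (Tuple.sort u).toEmbedding ⊆
      Finset.univ.filter fun j => sortedTuple u i ≤ u j := by
    intro j hj
    obtain ⟨l, hl, rfl⟩ := Finset.mem_map.1 hj
    exact Finset.mem_filter.2
      ⟨Finset.mem_univ _, sortedTuple_monotone u (Finset.mem_Ici.1 hl)⟩
  have hcard := Finset.card_le_card hsub
  rwa [Finset.card_map, Fin.card_Ici] at hcard

/-- If `q` k-dominates `p` then `MI_min(q, k, α) ≤ MI_max(p, k, α)` for every `α < k`. -/
theorem kDom_mi_min_le_mi_max {d k : ℕ} (hk1 : 1 ≤ k) (hkd : k ≤ d)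
    (p q : Fin d → ℝ) (hdom : kDom k q p) (α : ℕ) (hα : α < k) :
    sortedTuple q ⟨α, by omega⟩ ≤ sortedTuple p ⟨α + d - k, by omega⟩ := by
  obtain ⟨⟨S, hS, hle⟩, -⟩ := hdom
  have hp := lt_card_filter_le_sortedTuple p ⟨α + d - k, by omega⟩
  have hq := sub_le_card_filter_sortedTuple_le q ⟨α, by omega⟩
  set A := Finset.univ.filter fun j => p j ≤ sortedTuple p ⟨α + d - k, by omega⟩
  set B := Finset.univ.filter fun j => sortedTuple q ⟨α, by omega⟩ ≤ q j
  have hAB := Finset.card_union_add_card_inter A B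
  have hABS := Finset.card_union_add_card_inter (A ∩ B) S
  have hAB_le := Finset.card_le_univ (A ∪ B)
  have hABS_le := Finset.card_le_univ ((A ∩ B) ∪ S)
  rw [Fintype.card_fin] at hAB_le hABS_le
  dsimp only at hp hq
  obtain ⟨j, hj⟩ : ((A ∩ B) ∩ S).Nonempty := Finset.card_pos.1 (by omega)
  obtain ⟨hjAB, hjS⟩ := Finset.mem_inter.1 hj
  obtain ⟨hjA, hjB⟩ := Finset.mem_inter.1 hjAB
  exact (Finset.mem_filter.1 hjB).2.trans ((hle j hjS).trans (Finset.mem_filter.1 hjA).2)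
end

section
/- Let ι be a type with decidable equality, W : Finset ι, x : ι → (Fin d → ℝ), P : ι → ℝ, and k ≤ d. Let u ∈ W, u_old ∈ W with u_old ≠ u, and u_new ∉ W. If x(u_old) k-dominates x(u) with P(u_old) ≠ 1 and x(u_new) k-dominates x(u), then the window update that removes u_old and inserts u_new satisfies ℙ_{k-sky}(insert u_new (W \ {u_old}), u) = (ℙ_{k-sky}(W, u) / (1 − P(u_old))) · (1 − P(u_new)). -/
open Classical in
/-- The k-dominant skyline probability of item `u` within window `W`. -/
noncomputable def kSkyProb {ι : Type*} [DecidableEq ι] {d : ℕ} (k : ℕ)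
    (x : ι → Fin d → ℝ) (P : ι → ℝ) (W : Finset ι) (u : ι) : ℝ :=
  P u * ∏ u' ∈ W.filter (fun v => v ≠ u ∧ kDom k (x v) (x u)), (1 - P u')

/-- Inserting a new item that k-dominates `u` multiplies the skyline probability of `u` by
the probability that the item does not occur. -/
theorem kSkyProb_insert_of_kDom {ι : Type*} [DecidableEq ι] {d k : ℕ} {W : Finset ι}
    {x : ι → Fin d → ℝ} (P : ι → ℝ) {u v : ι} (hv : v ∉ W) (hne : v ≠ u)
    (hdom : kDom k (x v) (x u)) :
    kSkyProb k x P (insert v W) u = kSkyProb k x P W u * (1 - P v) := by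
  classical
  unfold kSkyProb
  rw [Finset.filter_insert, if_pos ⟨hne, hdom⟩,
    Finset.prod_insert fun h => hv (Finset.mem_of_mem_filter v h)]
  ring

/-- A sliding-window update removing `u_old` and inserting `u_new`, both of
which k-dominate `u`, updates its k-dominant skyline probability accordingly. -/
theorem kSkyProb_window_update {ι : Type*} [DecidableEq ι] {d k : ℕ} (hkd : k ≤ d)
    (W : Finset ι) (x : ι → Fin d → ℝ) (P : ι → ℝ)
    (u uold unew : ι) (hu : u ∈ W) (hold : uold ∈ W) (hne : uold ≠ u) (hnew : unew ∉ W)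
    (hdomold : kDom k (x uold) (x u)) (hP : P uold ≠ 1)
    (hdomnew : kDom k (x unew) (x u)) :
    kSkyProb k x P (insert unew (W.erase uold)) u
      = kSkyProb k x P W u / (1 - P uold) * (1 - P unew) := by
  have hnewu : unew ≠ u := fun h => hnew (h ▸ hu)
  have hP' : 1 - P uold ≠ 0 := sub_ne_zero.mpr hP.symm
  have hW := kSkyProb_insert_of_kDom P (Finset.notMem_erase uold W) hne hdomold
  rw [Finset.insert_erase hold] at hW
  rw [kSkyProb_insert_of_kDom P (fun h => hnew (Finset.mem_of_mem_erase h)) hnewu hdomnew, hW,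
    mul_div_cancel_right₀ _ hP']
end

section
/- Let d, k be natural numbers with 1 ≤ k ≤ d, let q : Fin d → ℝ, and let W be a finite set of points of Fin d → ℝ. Then the set of items of W that are k-dominated by q is contained in the All-Indexing candidate set: {e ∈ W | q ≺_k e} ⊆ {e ∈ W | for every α < k, MI_min(q, k, α) ≤ MI_max(e, k, α)}. (Soundness of the AI pruning filter: no item whose k-dominant probability must be updated is pruned.) -/
/-- If `q ≤ e` on a set `S` with more than `a + (d - 1 - b)` coordinates, then the entry of rank `a`
of `q` is at most the entry of rank `b` of `e`. -/
theorem sortedTuple_le_sortedTuple {d : ℕ} {q e : Fin d → ℝ} {S : Finset (Fin d)}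
    (hS : ∀ j ∈ S, q j ≤ e j) (a b : Fin d) (hcard : (a : ℕ) + (d - 1 - b) < S.card) :
    sortedTuple q a ≤ sortedTuple e b := by
  obtain ⟨j, hjS, hj⟩ : ∃ j ∈ S, j ∉ (Finset.Iio a).map (Tuple.sort q).toEmbedding ∪
      (Finset.Ioi b).map (Tuple.sort e).toEmbedding := by
    refine Finset.exists_mem_notMem_of_card_lt_card
      ((Finset.card_union_le _ _).trans_lt ?_)
    simpa using hcard
  simp only [Finset.mem_union, Finset.mem_map_equiv, Finset.mem_Iio, Finset.mem_Ioi, not_or,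
    not_lt] at hj
  calc sortedTuple q a ≤ sortedTuple q ((Tuple.sort q).symm j) := Tuple.monotone_sort q hj.1
    _ = q j := by simp [sortedTuple]
    _ ≤ e j := hS j hjS
    _ = sortedTuple e ((Tuple.sort e).symm j) := by simp [sortedTuple]
    _ ≤ sortedTuple e b := Tuple.monotone_sort e hj.2

/-- Soundness of the AI pruning filter: every item of `W` that is k-dominated
by `q` lies in the All-Indexing candidate set. -/
theorem ai_filter_sound {d k : ℕ} (hk1 : 1 ≤ k) (hkd : k ≤ d)
    (q : Fin d → ℝ) (W : Finset (Fin d → ℝ)) :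
    {e | e ∈ W ∧ kDom k q e} ⊆
      {e | e ∈ W ∧ ∀ α (hα : α < k),
        sortedTuple q ⟨α, by omega⟩ ≤ sortedTuple e ⟨α + d - k, by omega⟩} := by
  rintro e ⟨heW, ⟨S, hcard, hS⟩, -⟩
  refine ⟨heW, fun α hα => sortedTuple_le_sortedTuple hS _ _ ?_⟩
  dsimp only
  omega
end
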